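/- arXiv:1912.01392 — 2 statements merged into one kernel-verified Lean document; each statement's English description precedes it below -/
import Mathlib

section
/- Let (H, Δ, Δ') be a Hopf brace with antipodes S (for Δ) and T (for Δ'), and set ρ(h) = h_{(-1)} ⊗ h_{(0)} = S(h_1) h_{21'} ⊗ h_{22'}. Then for all h ∈ H: h_1 ⊗ h_2 = h_{1'} T(h_{2'(-1)}) ⊗ h_{2'(0)}, i.e. Δ(h) = (m ⊗ id)(id ⊗ (T ⊗ id)ρ)Δ'(h). -/
/-!
Write `γ(x ⊗ y) = x y_{(-1)} ⊗ y_{(0)}`. Since `S` is the convolution inverse of the identity,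
the definition of `ρ` says precisely that `Δ' = γ ∘ Δ`. If `ρ` is a left coaction of the coalgebra
`(H, Δ', ε')`, then `x ⊗ y ↦ x T(y_{(-1)}) ⊗ y_{(0)}` is a left inverse of `γ`; applying it to
`Δ' = γ ∘ Δ` gives the claim.

That `ρ` is a coaction is a computation in the convolution algebras of linear maps from `(H, Δ, ε)`
to an algebra. There the compatibility condition (2.1) reads
`(id ⊗ (f * g)) Δ' = (id ⊗ f) Δ' * (S ⊗ 1) * (id ⊗ g) Δ'`, and `ρ` is the product `(S ⊗ 1) * Δ'`,
where `S ⊗ 1` is the map `h ↦ S(h) ⊗ 1`. Both sides of the coassociativity law of `ρ` then come out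
as `((id ⊗ ι) Δ' S) * ((id ⊗ Δ') Δ')` with `ι(x) = x ⊗ 1`.
-/

open TensorProduct

noncomputable section

namespace HopfPaper

/-- A Hopf algebra structure (comultiplication `Δ`, counit `ε`, antipode `S`) on a
given `k`-algebra `H`, expressed in terms of `k`-linear maps.  Together with the
algebra structure of `H` this is exactly the data of a Hopf algebra
`(H, m, 1, Δ, ε, S)` over the field `k`. -/
structure HopfStruct (k : Type*) [Field k] (H : Type*) [Ring H] [Algebra k H] where
  /-- the comultiplication -/
  Δ : H →ₗ[k] H ⊗[k] H
  /-- the counit -/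
  ε : H →ₗ[k] k
  /-- the antipode -/
  S : H →ₗ[k] H
  coassoc : ∀ h : H,
    TensorProduct.map (LinearMap.id : H →ₗ[k] H) Δ (Δ h)
      = TensorProduct.assoc k H H H
          (TensorProduct.map Δ (LinearMap.id : H →ₗ[k] H) (Δ h))
  counit_left : ∀ h : H,
    TensorProduct.lid k H (TensorProduct.map ε (LinearMap.id : H →ₗ[k] H) (Δ h)) = h
  counit_right : ∀ h : H,
    TensorProduct.rid k H (TensorProduct.map (LinearMap.id : H →ₗ[k] H) ε (Δ h)) = h
  comul_mul : ∀ a b : H, Δ (a * b) = Δ a * Δ b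
  comul_one : Δ 1 = 1
  counit_mul : ∀ a b : H, ε (a * b) = ε a * ε b
  counit_one : ε 1 = 1
  antipode_left : ∀ h : H,
    LinearMap.mul' k H (TensorProduct.map S (LinearMap.id : H →ₗ[k] H) (Δ h))
      = algebraMap k H (ε h)
  antipode_right : ∀ h : H,
    LinearMap.mul' k H (TensorProduct.map (LinearMap.id : H →ₗ[k] H) S (Δ h))
      = algebraMap k H (ε h)

variable (k : Type*) [Field k]

/-- `m ↦ m ⊗ 1`. -/
def ι₁ (M N : Type*) [Ring M] [Algebra k M] [Ring N] [Algebra k N] :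
    M →ₗ[k] M ⊗[k] N :=
  (TensorProduct.mk k M N).flip 1

/-- `n ↦ 1 ⊗ n`. -/
def ι₂ (M N : Type*) [Ring M] [Algebra k M] [Ring N] [Algebra k N] :
    N →ₗ[k] M ⊗[k] N :=
  TensorProduct.mk k M N 1

/-- multiplication of three factors, `x ⊗ (y ⊗ z) ↦ x * y * z`. -/
def mul₃ (T : Type*) [Ring T] [Algebra k T] : T ⊗[k] (T ⊗[k] T) →ₗ[k] T :=
  (LinearMap.mul' k T).comp
    (TensorProduct.map (LinearMap.id : T →ₗ[k] T) (LinearMap.mul' k T))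

/-- multiplication of four factors. -/
def mul₄ (T : Type*) [Ring T] [Algebra k T] :
    T ⊗[k] (T ⊗[k] (T ⊗[k] T)) →ₗ[k] T :=
  (LinearMap.mul' k T).comp
    (TensorProduct.map (LinearMap.id : T →ₗ[k] T) (mul₃ k T))

/-- The left hand side `h_{1'} ⊗ h_{2'1} ⊗ h_{2'2}` of the Hopf brace compatibility
condition (2.1), i.e. `(id ⊗ Δ) ∘ Δ'`. -/
def braceLHS (H : Type*) [Ring H] [Algebra k H] (Δ Δ' : H →ₗ[k] H ⊗[k] H) :
    H →ₗ[k] H ⊗[k] (H ⊗[k] H) :=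
  (TensorProduct.map (LinearMap.id : H →ₗ[k] H) Δ).comp Δ'

/-- The right hand side `h_{11'}S(h_2)h_{31'} ⊗ h_{12'} ⊗ h_{32'}` of the Hopf brace
compatibility condition (2.1):  it is obtained from the twofold comultiplication
`h ↦ h_1 ⊗ (h_2 ⊗ h_3)` (using `Δ`) by applying `Δ'` to the first and third legs,
`S` to the middle leg, placing the results in the appropriate tensor positions of
`H ⊗ (H ⊗ H)` (filled with `1`s) and multiplying. -/
def braceRHS (H : Type*) [Ring H] [Algebra k H] (Δ Δ' : H →ₗ[k] H ⊗[k] H)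
    (S : H →ₗ[k] H) : H →ₗ[k] H ⊗[k] (H ⊗[k] H) :=
  (mul₃ k (H ⊗[k] (H ⊗[k] H))).comp
    ((TensorProduct.map
        ((TensorProduct.map (LinearMap.id : H →ₗ[k] H) (ι₁ k H H)).comp Δ')
        (TensorProduct.map ((ι₁ k H (H ⊗[k] H)).comp S)
          ((TensorProduct.map (LinearMap.id : H →ₗ[k] H) (ι₂ k H H)).comp Δ'))).comp
      ((TensorProduct.map (LinearMap.id : H →ₗ[k] H) Δ).comp Δ))

/-- A Hopf brace on the `k`-algebra `H` : two Hopf algebra structures sharing the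
multiplication and unit of `H`, subject to the compatibility condition (2.1):
`h_{1'} ⊗ h_{2'1} ⊗ h_{2'2} = h_{11'}S(h_2)h_{31'} ⊗ h_{12'} ⊗ h_{32'}`. -/
structure HopfBrace (H : Type*) [Ring H] [Algebra k H] where
  fst : HopfStruct k H
  snd : HopfStruct k H
  compat : ∀ h : H,
    braceLHS k H fst.Δ snd.Δ h = braceRHS k H fst.Δ snd.Δ fst.S h

/-- The coaction `ρ(h) = S(h_1) h_{21'} ⊗ h_{22'}` of Lemma 2.5. -/
def ρmap (H : Type*) [Ring H] [Algebra k H] (Δ Δ' : H →ₗ[k] H ⊗[k] H)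
    (S : H →ₗ[k] H) : H →ₗ[k] H ⊗[k] H :=
  (LinearMap.mul' k (H ⊗[k] H)).comp
    ((TensorProduct.map ((ι₁ k H H).comp S) Δ').comp Δ)

/-- The coaction `φ(a) = (T(a_{1'}))_{(-1)} a_{2'} ⊗ (T(a_{1'}))_{(0)} a_{3'}`
of Lemma 2.8(2), where `x_{(-1)} ⊗ x_{(0)} = ρ(x)`. -/
def φmap (H : Type*) [Ring H] [Algebra k H] (Δ Δ' : H →ₗ[k] H ⊗[k] H)
    (S T : H →ₗ[k] H) : H →ₗ[k] H ⊗[k] H :=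
  (LinearMap.mul' k (H ⊗[k] H)).comp
    ((TensorProduct.map ((ρmap k H Δ Δ' S).comp T)
        (LinearMap.id : H ⊗[k] H →ₗ[k] H ⊗[k] H)).comp
      ((TensorProduct.map (LinearMap.id : H →ₗ[k] H) Δ').comp Δ'))

/-- `ρ : A →ₗ H ⊗ A` is a coassociative counital left coaction of the coalgebra
`(H, ΔH, εH)`. -/
def LeftCoaction (A H : Type*) [Ring A] [Algebra k A] [Ring H] [Algebra k H]
    (ΔH : H →ₗ[k] H ⊗[k] H) (εH : H →ₗ[k] k) (ρ : A →ₗ[k] H ⊗[k] A) : Prop :=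
  (∀ a : A,
    TensorProduct.map (LinearMap.id : H →ₗ[k] H) ρ (ρ a)
      = TensorProduct.assoc k H H A
          (TensorProduct.map ΔH (LinearMap.id : A →ₗ[k] A) (ρ a))) ∧
  (∀ a : A,
    TensorProduct.lid k A (TensorProduct.map εH (LinearMap.id : A →ₗ[k] A) (ρ a)) = a)

/-- `φ : H →ₗ H ⊗ A` is a coassociative counital right coaction of the coalgebra
`(A, ΔA, εA)`. -/
def RightCoaction (A H : Type*) [Ring A] [Algebra k A] [Ring H] [Algebra k H]
    (ΔA : A →ₗ[k] A ⊗[k] A) (εA : A →ₗ[k] k) (φ : H →ₗ[k] H ⊗[k] A) : Prop :=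
  (∀ h : H,
    TensorProduct.map (LinearMap.id : H →ₗ[k] H) ΔA (φ h)
      = TensorProduct.assoc k H A A
          (TensorProduct.map φ (LinearMap.id : A →ₗ[k] A) (φ h))) ∧
  (∀ h : H,
    TensorProduct.rid k H (TensorProduct.map (LinearMap.id : H →ₗ[k] H) εA (φ h)) = h)

/-- a linear map which is moreover multiplicative and unital. -/
def IsAlgebraMorphism (M N : Type*) [Ring M] [Algebra k M] [Ring N] [Algebra k N]
    (f : M →ₗ[k] N) : Prop :=
  (∀ a b : M, f (a * b) = f a * f b) ∧ f 1 = 1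

/-- `a ↦ a_{1(-1)} a_{2(-1)} ⊗ a_{1(0)} ⊗ a_{2(0)}`, the right hand side of the
comodule coalgebra condition. -/
def comodCoalgRHS (A H : Type*) [Ring A] [Algebra k A] [Ring H] [Algebra k H]
    (ΔA : A →ₗ[k] A ⊗[k] A) (ρ : A →ₗ[k] H ⊗[k] A) :
    A →ₗ[k] H ⊗[k] (A ⊗[k] A) :=
  (LinearMap.mul' k (H ⊗[k] (A ⊗[k] A))).comp
    ((TensorProduct.map
        ((TensorProduct.map (LinearMap.id : H →ₗ[k] H) (ι₁ k A A)).comp ρ)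
        ((TensorProduct.map (LinearMap.id : H →ₗ[k] H) (ι₂ k A A)).comp ρ)).comp ΔA)

/-- The two conditions making a left `H`-comodule `(A, ρ)` a comodule coalgebra:
`a_{(-1)} ⊗ Δ(a_{(0)}) = a_{1(-1)} a_{2(-1)} ⊗ a_{1(0)} ⊗ a_{2(0)}` and
`a_{(-1)} ε(a_{(0)}) = ε(a) 1`. -/
def IsComodCoalg (A H : Type*) [Ring A] [Algebra k A] [Ring H] [Algebra k H]
    (ΔA : A →ₗ[k] A ⊗[k] A) (εA : A →ₗ[k] k) (ρ : A →ₗ[k] H ⊗[k] A) : Prop :=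
  (∀ a : A,
    TensorProduct.map (LinearMap.id : H →ₗ[k] H) ΔA (ρ a)
      = comodCoalgRHS k A H ΔA ρ a) ∧
  (∀ a : A,
    TensorProduct.rid k H (TensorProduct.map (LinearMap.id : H →ₗ[k] H) εA (ρ a))
      = algebraMap k H (εA a))

/-- `a ↦ a_{1(-1)} a_{2(-1)[0]} ⊗ a_{1(0)} a_{2(-1)[1]} ⊗ a_{2(0)}`, the right hand
side of (HM2). -/
def HM2RHS (A H : Type*) [Ring A] [Algebra k A] [Ring H] [Algebra k H]
    (ΔA : A →ₗ[k] A ⊗[k] A) (ρ : A →ₗ[k] H ⊗[k] A) (φ : H →ₗ[k] H ⊗[k] A) :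
    A →ₗ[k] H ⊗[k] (A ⊗[k] A) :=
  (LinearMap.mul' k (H ⊗[k] (A ⊗[k] A))).comp
    ((TensorProduct.map
        ((TensorProduct.map (LinearMap.id : H →ₗ[k] H) (ι₁ k A A)).comp ρ)
        ((TensorProduct.assoc k H A A).toLinearMap.comp
          ((TensorProduct.map φ (LinearMap.id : A →ₗ[k] A)).comp ρ))).comp ΔA)

/-- `h ↦ h_{1[0]} ⊗ h_{1[1](-1)} h_{2[0]} ⊗ h_{1[1](0)} h_{2[1]}`, the right hand
side of (HM3). -/
def HM3RHS (A H : Type*) [Ring A] [Algebra k A] [Ring H] [Algebra k H]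
    (ΔH : H →ₗ[k] H ⊗[k] H) (ρ : A →ₗ[k] H ⊗[k] A) (φ : H →ₗ[k] H ⊗[k] A) :
    H →ₗ[k] H ⊗[k] (H ⊗[k] A) :=
  (LinearMap.mul' k (H ⊗[k] (H ⊗[k] A))).comp
    ((TensorProduct.map
        ((TensorProduct.map (LinearMap.id : H →ₗ[k] H) ρ).comp φ)
        ((ι₂ k H (H ⊗[k] A)).comp φ)).comp ΔH)

/-- A Hopf matched pair `(A, H)` (Definition 3.1): `ρ` makes `A` a left
`H`-comodule algebra, `φ` makes `H` a right `A`-comodule algebra, and the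
compatibility conditions (HM1)–(HM4) hold. -/
def IsHopfMatchedPair (A H : Type*) [Ring A] [Algebra k A] [Ring H] [Algebra k H]
    (ΔA : A →ₗ[k] A ⊗[k] A) (εA : A →ₗ[k] k)
    (ΔH : H →ₗ[k] H ⊗[k] H) (εH : H →ₗ[k] k)
    (ρ : A →ₗ[k] H ⊗[k] A) (φ : H →ₗ[k] H ⊗[k] A) : Prop :=
  LeftCoaction k A H ΔH εH ρ ∧
  IsAlgebraMorphism k A (H ⊗[k] A) ρ ∧
  RightCoaction k A H ΔA εA φ ∧
  IsAlgebraMorphism k H (H ⊗[k] A) φ ∧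
  -- (HM1)
  (∀ a : A,
    TensorProduct.rid k H (TensorProduct.map (LinearMap.id : H →ₗ[k] H) εA (ρ a))
      = algebraMap k H (εA a)) ∧
  (∀ h : H,
    TensorProduct.lid k A (TensorProduct.map εH (LinearMap.id : A →ₗ[k] A) (φ h))
      = algebraMap k A (εH h)) ∧
  -- (HM2)
  (∀ a : A,
    TensorProduct.map (LinearMap.id : H →ₗ[k] H) ΔA (ρ a) = HM2RHS k A H ΔA ρ φ a) ∧
  -- (HM3)
  (∀ h : H,
    TensorProduct.assoc k H H A
        (TensorProduct.map ΔH (LinearMap.id : A →ₗ[k] A) (φ h))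
      = HM3RHS k A H ΔH ρ φ h) ∧
  -- (HM4)
  (∀ (a : A) (h : H), φ h * ρ a = ρ a * φ h)

/-- Equation (3.2): `Δ(a) = a_{1'} T(a_{2'(-1)}) ⊗ a_{2'(0)}`. -/
def Δfromρ (A : Type*) [Ring A] [Algebra k A] (Δ' : A →ₗ[k] A ⊗[k] A)
    (T : A →ₗ[k] A) (ρ : A →ₗ[k] A ⊗[k] A) : A →ₗ[k] A ⊗[k] A :=
  (LinearMap.mul' k (A ⊗[k] A)).comp
    ((TensorProduct.map (ι₁ k A A)
        ((TensorProduct.map T (LinearMap.id : A →ₗ[k] A)).comp ρ)).comp Δ')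

/-- Equation (3.3): `S(a) = a_{(-1)} T(a_{(0)})`. -/
def Sfromρ (A : Type*) [Ring A] [Algebra k A] (T : A →ₗ[k] A)
    (ρ : A →ₗ[k] A ⊗[k] A) : A →ₗ[k] A :=
  (LinearMap.mul' k A).comp
    ((TensorProduct.map (LinearMap.id : A →ₗ[k] A) T).comp ρ)

/-- The comultiplication `Δ_R(h) = R · Δ(h) · R⁻¹` obtained by conjugating `Δ` with
an invertible element `R ∈ H ⊗ H`. -/
def conjComul (H : Type*) [Ring H] [Algebra k H] (R Rinv : H ⊗[k] H)
    (Δ : H →ₗ[k] H ⊗[k] H) : H →ₗ[k] H ⊗[k] H :=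
  (LinearMap.mulLeft k R).comp ((LinearMap.mulRight k Rinv).comp Δ)

/-- The braiding candidate `c(x ⊗ y) = x_{(-1)} y_{[0]} ⊗ x_{(0)} y_{[1]}` of
Proposition 2.9, i.e. `c = mult ∘ (ρ ⊗ φ)`. -/
def cmap (A : Type*) [Ring A] [Algebra k A] (Δ Δ' : A →ₗ[k] A ⊗[k] A)
    (S T : A →ₗ[k] A) : A ⊗[k] A →ₗ[k] A ⊗[k] A :=
  (LinearMap.mul' k (A ⊗[k] A)).comp
    (TensorProduct.map (ρmap k A Δ Δ' S) (φmap k A Δ Δ' S T))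

/-- `γ(x ⊗ y) = x y_{(-1)} ⊗ y_{(0)}` for a coaction `ρ(y) = y_{(-1)} ⊗ y_{(0)}`. -/
def γmap (A : Type*) [Ring A] [Algebra k A] (ρ : A →ₗ[k] A ⊗[k] A) :
    A ⊗[k] A →ₗ[k] A ⊗[k] A :=
  (LinearMap.mul' k (A ⊗[k] A)).comp (TensorProduct.map (ι₁ k A A) ρ)

/-- `σ(x ⊗ y) = y_2 ⊗ x S(y_1) y_3`. -/
def σmap (A : Type*) [Ring A] [Algebra k A] (Δ : A →ₗ[k] A ⊗[k] A)
    (S : A →ₗ[k] A) : A ⊗[k] A →ₗ[k] A ⊗[k] A :=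
  (mul₄ k (A ⊗[k] A)).comp
    ((TensorProduct.map (ι₂ k A A)
        (TensorProduct.map ((ι₂ k A A).comp S)
          (TensorProduct.map (ι₁ k A A) (ι₂ k A A)))).comp
      (TensorProduct.map (LinearMap.id : A →ₗ[k] A)
        ((TensorProduct.map (LinearMap.id : A →ₗ[k] A) Δ).comp Δ)))

/-- The usual tensor product comultiplication `Δ̂` on `A ⊗ H`:
`a ⊗ h ↦ (a_1 ⊗ h_1) ⊗ (a_2 ⊗ h_2)`. -/
def hatΔ (A H : Type*) [Ring A] [Algebra k A] [Ring H] [Algebra k H]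
    (ΔA : A →ₗ[k] A ⊗[k] A) (ΔH : H →ₗ[k] H ⊗[k] H) :
    A ⊗[k] H →ₗ[k] (A ⊗[k] H) ⊗[k] (A ⊗[k] H) :=
  (TensorProduct.tensorTensorTensorComm k A A H H).toLinearMap.comp
    (TensorProduct.map ΔA ΔH)

/-- The bicrossed coproduct comultiplication on `A ⊗ H`:
`Δ̃(a ⊗ h) = a_1 ⊗ a_{2(-1)} h_{1[0]} ⊗ a_{2(0)} h_{1[1]} ⊗ h_2`. -/
def bicrossΔ (A H : Type*) [Ring A] [Algebra k A] [Ring H] [Algebra k H]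
    (ΔA : A →ₗ[k] A ⊗[k] A) (ΔH : H →ₗ[k] H ⊗[k] H)
    (ρ : A →ₗ[k] H ⊗[k] A) (φ : H →ₗ[k] H ⊗[k] A) :
    A ⊗[k] H →ₗ[k] (A ⊗[k] H) ⊗[k] (A ⊗[k] H) :=
  (LinearMap.mul' k ((A ⊗[k] H) ⊗[k] (A ⊗[k] H))).comp
    (TensorProduct.map
      -- a ↦ (a_1 ⊗ a_{2(-1)}) ⊗ (a_{2(0)} ⊗ 1)
      ((TensorProduct.map (LinearMap.id : A ⊗[k] H →ₗ[k] A ⊗[k] H) (ι₁ k A H)).comp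
        ((TensorProduct.assoc k A H A).symm.toLinearMap.comp
          ((TensorProduct.map (LinearMap.id : A →ₗ[k] A) ρ).comp ΔA)))
      -- h ↦ (1 ⊗ h_{1[0]}) ⊗ (h_{1[1]} ⊗ h_2)
      ((TensorProduct.map (ι₂ k A H) (LinearMap.id : A ⊗[k] H →ₗ[k] A ⊗[k] H)).comp
        ((TensorProduct.assoc k H A H).toLinearMap.comp
          ((TensorProduct.map φ (LinearMap.id : H →ₗ[k] H)).comp ΔH))))

/-- The antipode of the bicrossed coproduct:
`S̃(a ⊗ h) = S_A(h_{[1]}) S_A(a_{(0)}) ⊗ S_H(h_{[0]}) S_H(a_{(-1)})`. -/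
def bicrossS (A H : Type*) [Ring A] [Algebra k A] [Ring H] [Algebra k H]
    (SA : A →ₗ[k] A) (SH : H →ₗ[k] H)
    (ρ : A →ₗ[k] H ⊗[k] A) (φ : H →ₗ[k] H ⊗[k] A) :
    A ⊗[k] H →ₗ[k] A ⊗[k] H :=
  (LinearMap.mul' k (A ⊗[k] H)).comp
    ((TensorProduct.map
        ((TensorProduct.map SA SH).comp ((TensorProduct.comm k H A).toLinearMap.comp φ))
        ((TensorProduct.map SA SH).comp ((TensorProduct.comm k H A).toLinearMap.comp ρ))).comp
      (TensorProduct.comm k A H).toLinearMap)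

/-- The left hand side `h_{[0]} ⊗ h_{[1]1} ⊗ h_{[1]2}` of equation (4.1), where the
`A`-leg is comultiplied with `Δ'`. -/
def eq41LHS (A H : Type*) [Ring A] [Algebra k A] [Ring H] [Algebra k H]
    (Δ'A : A →ₗ[k] A ⊗[k] A) (φ : H →ₗ[k] H ⊗[k] A) :
    H →ₗ[k] H ⊗[k] (A ⊗[k] A) :=
  (TensorProduct.map (LinearMap.id : H →ₗ[k] H) Δ'A).comp φ

/-- The right hand side `h_{1[0]} S(h_2) h_{3[0]} ⊗ h_{1[1]} ⊗ h_{3[1]}` of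
equation (4.1). -/
def eq41RHS (A H : Type*) [Ring A] [Algebra k A] [Ring H] [Algebra k H]
    (ΔH : H →ₗ[k] H ⊗[k] H) (SH : H →ₗ[k] H) (φ : H →ₗ[k] H ⊗[k] A) :
    H →ₗ[k] H ⊗[k] (A ⊗[k] A) :=
  (mul₃ k (H ⊗[k] (A ⊗[k] A))).comp
    ((TensorProduct.map
        ((TensorProduct.map (LinearMap.id : H →ₗ[k] H) (ι₁ k A A)).comp φ)
        (TensorProduct.map ((ι₁ k H (A ⊗[k] A)).comp SH)
          ((TensorProduct.map (LinearMap.id : H →ₗ[k] H) (ι₂ k A A)).comp φ))).comp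
      ((TensorProduct.map (LinearMap.id : H →ₗ[k] H) ΔH).comp ΔH))

/-- `x ↦ x_{11'} S(x_2) ⊗ x_{12'} ⊗ 1 ∈ H ⊗ (H ⊗ A)`, an auxiliary map for
equations (4.2) and (4.3). -/
def LHmap (A H : Type*) [Ring A] [Algebra k A] [Ring H] [Algebra k H]
    (ΔH Δ'H : H →ₗ[k] H ⊗[k] H) (SH : H →ₗ[k] H) :
    H →ₗ[k] H ⊗[k] (H ⊗[k] A) :=
  (LinearMap.mul' k (H ⊗[k] (H ⊗[k] A))).comp
    ((TensorProduct.map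
        ((TensorProduct.map (LinearMap.id : H →ₗ[k] H) (ι₁ k H A)).comp Δ'H)
        ((ι₁ k H (H ⊗[k] A)).comp SH)).comp ΔH)

/-- The right hand side
`a_{(-1)11'} S(a_{(-1)2}) a_{(0)(-1)'} ⊗ a_{(-1)12'} ⊗ a_{(0)(0)'}` of
equation (4.2). -/
def eq42RHS (A H : Type*) [Ring A] [Algebra k A] [Ring H] [Algebra k H]
    (ΔH Δ'H : H →ₗ[k] H ⊗[k] H) (SH : H →ₗ[k] H)
    (ρ ρ' : A →ₗ[k] H ⊗[k] A) :
    A →ₗ[k] H ⊗[k] (H ⊗[k] A) :=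
  (LinearMap.mul' k (H ⊗[k] (H ⊗[k] A))).comp
    ((TensorProduct.map (LHmap k A H ΔH Δ'H SH)
        ((TensorProduct.map (LinearMap.id : H →ₗ[k] H) (ι₂ k H A)).comp ρ')).comp ρ)

/-- The right hand side
`h_{1[0]11'} S(h_{1[0]2}) h_{1[1](-1)'} h_2 ⊗ h_{1[0]12'} ⊗ h_{1[1](0)'}` of
equation (4.3). -/
def eq43RHS (A H : Type*) [Ring A] [Algebra k A] [Ring H] [Algebra k H]
    (ΔH Δ'H : H →ₗ[k] H ⊗[k] H) (SH : H →ₗ[k] H)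
    (ρ' : A →ₗ[k] H ⊗[k] A) (φ : H →ₗ[k] H ⊗[k] A) :
    H →ₗ[k] H ⊗[k] (H ⊗[k] A) :=
  (LinearMap.mul' k (H ⊗[k] (H ⊗[k] A))).comp
    ((TensorProduct.map
        ((LinearMap.mul' k (H ⊗[k] (H ⊗[k] A))).comp
          ((TensorProduct.map (LHmap k A H ΔH Δ'H SH)
              ((TensorProduct.map (LinearMap.id : H →ₗ[k] H) (ι₂ k H A)).comp ρ')).comp φ))
        (ι₁ k H (H ⊗[k] A))).comp ΔH)

section

open LinearMap WithConv Coalgebra HopfAlgebra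
open scoped RingTheory.LinearMap

section Convolution

lemma algHom_comp_convOne {R D A B : Type*} [CommSemiring R] [AddCommMonoid D] [Module R D]
    [Coalgebra R D] [Semiring A] [Algebra R A] [Semiring B] [Algebra R B] (φ : A →ₐ[R] B) :
    φ.toLinearMap ∘ₗ (1 : WithConv (D →ₗ[R] A)).ofConv = (1 : WithConv (D →ₗ[R] B)).ofConv := by
  ext; simp [LinearMap.convOne_def]

section AlgHom

variable {R C B : Type*} [CommSemiring R] [Semiring C] [HopfAlgebra R C] [Semiring B] [Algebra R B]

lemma algHom_comp_antipode_convMul (φ : C →ₐ[R] B) :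
    toConv (φ.toLinearMap ∘ₗ antipode R) * toConv φ.toLinearMap = 1 := by
  have h := algHom_comp_convMul_distrib φ (toConv (antipode R (A := C))) (toConv .id)
  rw [antipode_mul_id, algHom_comp_convOne] at h
  exact congrArg toConv h.symm

lemma algHom_convMul_comp_antipode (φ : C →ₐ[R] B) :
    toConv φ.toLinearMap * toConv (φ.toLinearMap ∘ₗ antipode R) = 1 := by
  have h := algHom_comp_convMul_distrib φ (toConv .id) (toConv (antipode R (A := C)))
  rw [id_mul_antipode, algHom_comp_convOne] at h
  exact congrArg toConv h.symm

end AlgHom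

variable {k} {D H B C : Type*} [AddCommGroup D] [Module k D] [Coalgebra k D]
  [Ring H] [Ring B] [Algebra k B] [Ring C] [Algebra k C]

lemma ofConv_convMul_convMul (f g l : D →ₗ[k] B) :
    (toConv f * (toConv g * toConv l)).ofConv =
      mul₃ k B ∘ₗ (f ⊗ₘ (g ⊗ₘ l)) ∘ₗ (.id ⊗ₘ comul) ∘ₗ comul := by
  have hmap : (f ⊗ₘ (mul' k B ∘ₗ (g ⊗ₘ l) ∘ₗ comul)) =
      (.id ⊗ₘ mul' k B) ∘ₗ (f ⊗ₘ (g ⊗ₘ l)) ∘ₗ (.id ⊗ₘ comul) := by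
    simp only [← TensorProduct.map_comp, LinearMap.id_comp, LinearMap.comp_id]
  simp only [LinearMap.convMul_def, ofConv_toConv, hmap, mul₃, LinearMap.comp_assoc]

lemma map_id_ι₁_mul [Algebra k H] (f : B →ₗ[k] C) (x : H) (w : H ⊗[k] B) :
    (.id ⊗ₘ f) (ι₁ k H B x * w) = ι₁ k H C x * (.id ⊗ₘ f) w := by
  induction w with
  | zero => simp
  | add w v hw hv => simp only [mul_add, map_add, hw, hv]
  | tmul a b => simp [ι₁]

lemma map_id_comp_ι₁_convMul [Algebra k H] (f : B →ₗ[k] C) (g : D →ₗ[k] H)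
    (l : D →ₗ[k] H ⊗[k] B) :
    toConv ((.id ⊗ₘ f) ∘ₗ (toConv (ι₁ k H B ∘ₗ g) * toConv l).ofConv) =
      toConv (ι₁ k H C ∘ₗ g) * toConv ((.id ⊗ₘ f) ∘ₗ l) := by
  ext h
  simp [(ℛ k h).convMul_apply, map_id_ι₁_mul]

lemma ι₁_comp_antipode_convMul [HopfAlgebra k H] :
    toConv (ι₁ k H B ∘ₗ antipode k) * toConv (ι₁ k H B) = 1 :=
  algHom_comp_antipode_convMul Algebra.TensorProduct.includeLeft

lemma ι₁_convMul_comp_antipode [HopfAlgebra k H] :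
    toConv (ι₁ k H B) * toConv (ι₁ k H B ∘ₗ antipode k) = 1 :=
  algHom_convMul_comp_antipode Algebra.TensorProduct.includeLeft

end Convolution

section Gamma

variable {k} {H : Type*} [Ring H] [Algebra k H]

lemma γmap_ι₁_mul (ρ : H →ₗ[k] H ⊗[k] H) (x : H) (w : H ⊗[k] H) :
    γmap k H ρ (ι₁ k H H x * w) = ι₁ k H H x * γmap k H ρ w := by
  induction w with
  | zero => simp
  | add w v hw hv => simp only [mul_add, map_add, hw, hv]
  | tmul a b => simp [γmap, ι₁, ← mul_assoc]

lemma γmap_map_id_comp (T : H →ₗ[k] H) (ρ : H →ₗ[k] H ⊗[k] H) :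
    γmap k H ((T ⊗ₘ .id) ∘ₗ ρ) =
      ((mul' k H ∘ₗ (.id ⊗ₘ T)) ⊗ₘ .id) ∘ₗ (TensorProduct.assoc k H H H).symm.toLinearMap ∘ₗ
        (.id ⊗ₘ ρ) := by
  have hmul : mul' k (H ⊗[k] H) ∘ₗ (ι₁ k H H ⊗ₘ (T ⊗ₘ .id)) =
      ((mul' k H ∘ₗ (.id ⊗ₘ T)) ⊗ₘ .id) ∘ₗ (TensorProduct.assoc k H H H).symm.toLinearMap := by
    ext; simp [ι₁]
  rw [← LinearMap.comp_assoc, ← hmul, LinearMap.comp_assoc, ← TensorProduct.map_comp,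
    LinearMap.comp_id, γmap]

end Gamma

namespace HopfStruct

variable {k} {H B C : Type*} [Ring H] [Ring B] [Algebra k B] [Ring C] [Algebra k C]

section Structure

variable [Algebra k H] (A : HopfStruct k H)

/-- The Hopf algebra structure `A` as a term of Mathlib's class `HopfAlgebra`. -/
abbrev toHopfAlgebra : HopfAlgebra k H where
  comul := A.Δ
  counit := A.ε
  coassoc := LinearMap.ext fun h ↦ (A.coassoc h).symm
  rTensor_counit_comp_comul := LinearMap.ext fun h ↦
    (TensorProduct.lid k H).injective <| by simpa [rTensor] using A.counit_left h
  lTensor_counit_comp_comul := LinearMap.ext fun h ↦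
    (TensorProduct.rid k H).injective <| by simpa [lTensor] using A.counit_right h
  counit_one := A.counit_one
  mul_compr₂_counit := by ext; simp [A.counit_mul]
  comul_one := A.comul_one
  mul_compr₂_comul := by ext; simp [A.comul_mul]
  antipode := A.S
  mul_antipode_rTensor_comul := LinearMap.ext A.antipode_left
  mul_antipode_lTensor_comul := LinearMap.ext A.antipode_right

/-- The comultiplication of `A` as an algebra morphism. -/
def comulAlgHom : H →ₐ[k] H ⊗[k] H :=
  .ofLinearMap A.Δ A.comul_one A.comul_mul

/-- The counit of `A` as an algebra morphism. -/
def counitAlgHom : H →ₐ[k] k :=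
  .ofLinearMap A.ε A.counit_one A.counit_mul

/-- The map `h ↦ h_{1'} ⊗ f(h_{2'})`, where primes refer to `A`. -/
def lTensorComul (f : H →ₗ[k] B) : H →ₗ[k] H ⊗[k] B :=
  (.id ⊗ₘ f) ∘ₗ A.Δ

variable (B) in
/-- The algebra morphism `x ⊗ b ↦ ε(x) b`, with `ε` the counit of `A`. -/
def counitTensor : H ⊗[k] B →ₐ[k] B :=
  (Algebra.TensorProduct.lid k B).toAlgHom.comp
    (Algebra.TensorProduct.map A.counitAlgHom (.id k B))

@[simp]
lemma counitTensor_tmul (x : H) (b : B) : A.counitTensor B (x ⊗ₜ b) = A.ε x • b := rfl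

lemma counitTensor_comp_lTensorComul (f : H →ₗ[k] B) :
    (A.counitTensor B).toLinearMap ∘ₗ A.lTensorComul f = f := by
  have hcomm : (A.counitTensor B).toLinearMap ∘ₗ (.id ⊗ₘ f) =
      f ∘ₗ (TensorProduct.lid k H).toLinearMap ∘ₗ (A.ε ⊗ₘ .id) := by ext; simp
  ext h
  exact (LinearMap.congr_fun hcomm (A.Δ h)).trans (congrArg f (A.counit_left h))

lemma assoc_comul_tmul_one (x : H) :
    TensorProduct.assoc k H H C (A.Δ x ⊗ₜ 1) = A.lTensorComul (ι₁ k H C) x := by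
  have hassoc : (TensorProduct.assoc k H H C).toLinearMap ∘ₗ (TensorProduct.mk k _ C).flip 1 =
      (.id ⊗ₘ ι₁ k H C) := by
    ext; simp [ι₁]
  exact LinearMap.congr_fun hassoc (A.Δ x)

lemma γmap_antipode_apply_leftCoaction {ρ : H →ₗ[k] H ⊗[k] H}
    (hρ : LeftCoaction k H H A.Δ A.ε ρ) (h : H) :
    γmap k H ((A.S ⊗ₘ .id) ∘ₗ ρ) (ρ h) = 1 ⊗ₜ h := by
  have hS : mul' k H ∘ₗ (.id ⊗ₘ A.S) ∘ₗ A.Δ = Algebra.linearMap k H ∘ₗ A.ε :=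
    LinearMap.ext A.antipode_right
  have hε : ((Algebra.linearMap k H ∘ₗ A.ε) ⊗ₘ .id) =
      TensorProduct.mk k H H 1 ∘ₗ (TensorProduct.lid k H).toLinearMap ∘ₗ (A.ε ⊗ₘ .id) := by
    ext; simp [Algebra.algebraMap_eq_smul_one, TensorProduct.smul_tmul']
  calc γmap k H ((A.S ⊗ₘ .id) ∘ₗ ρ) (ρ h)
    _ = ((mul' k H ∘ₗ (.id ⊗ₘ A.S)) ⊗ₘ .id) ((A.Δ ⊗ₘ .id) (ρ h)) := by
      rw [γmap_map_id_comp]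
      simp [hρ.1 h]
    _ = ((Algebra.linearMap k H ∘ₗ A.ε) ⊗ₘ .id) (ρ h) := by
      rw [← hS, TensorProduct.map_map, LinearMap.id_comp, LinearMap.comp_assoc]
    _ = 1 ⊗ₜ h := by
      rw [hε]
      exact congrArg (TensorProduct.mk k H H 1) (hρ.2 h)

lemma γmap_antipode_comp_γmap {ρ : H →ₗ[k] H ⊗[k] H}
    (hρ : LeftCoaction k H H A.Δ A.ε ρ) :
    γmap k H ((A.S ⊗ₘ .id) ∘ₗ ρ) ∘ₗ γmap k H ρ = .id := by
  ext x y
  calc γmap k H ((A.S ⊗ₘ .id) ∘ₗ ρ) (ι₁ k H H x * ρ y)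
    _ = ι₁ k H H x * 1 ⊗ₜ y := by rw [γmap_ι₁_mul, A.γmap_antipode_apply_leftCoaction hρ]
    _ = x ⊗ₜ y := by simp [ι₁]

end Structure

variable [HopfAlgebra k H]

section Coaction

variable (A : HopfStruct k H)

/-- The map `ρ(h) = S(h_1) h_{21'} ⊗ h_{22'}`, where the unprimed structure is the Hopf algebra
instance on `H` and the primed one is `A`. -/
def coaction : H →ₗ[k] H ⊗[k] H := ρmap k H comul A.Δ (antipode k)

lemma toConv_coaction :
    toConv A.coaction = toConv (ι₁ k H H ∘ₗ antipode k) * toConv A.Δ := rfl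

lemma γmap_coaction_comp_comul : γmap k H A.coaction ∘ₗ comul = A.Δ := by
  have h : toConv (ι₁ k H H) * toConv A.coaction = toConv A.Δ := by
    rw [toConv_coaction, ← mul_assoc, ι₁_convMul_comp_antipode, one_mul]
  exact congrArg ofConv h

lemma assoc_map_comul_comp_coaction :
    toConv ((TensorProduct.assoc k H H H).toLinearMap ∘ₗ (A.Δ ⊗ₘ .id) ∘ₗ A.coaction) =
      toConv (A.lTensorComul (ι₁ k H H) ∘ₗ antipode k) * toConv (A.lTensorComul A.Δ) := by
  let φ : H ⊗[k] H →ₐ[k] H ⊗[k] (H ⊗[k] H) :=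
    (Algebra.TensorProduct.assoc k k k H H H).toAlgHom.comp
      (Algebra.TensorProduct.map A.comulAlgHom (.id k H))
  have hι : φ.toLinearMap ∘ₗ ι₁ k H H = A.lTensorComul (ι₁ k H H) :=
    LinearMap.ext A.assoc_comul_tmul_one
  have hΔ : φ.toLinearMap ∘ₗ A.Δ = A.lTensorComul A.Δ :=
    LinearMap.ext fun h ↦ (A.coassoc h).symm
  rw [← hι, ← hΔ]
  exact congrArg toConv (algHom_comp_convMul_distrib φ (toConv (ι₁ k H H ∘ₗ antipode k))
    (toConv A.Δ))

end Coaction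

/-- The compatibility condition (2.1) of a Hopf brace, with the Hopf algebra instance on `H` as
first structure and `A` as second. Keeping the first structure as an instance makes the convolution
product of linear maps `H → B` refer to it. -/
def IsBrace (A : HopfStruct k H) : Prop :=
  ∀ h, braceLHS k H comul A.Δ h = braceRHS k H comul A.Δ (antipode k) h

namespace IsBrace

variable {A : HopfStruct k H}

lemma lTensorComul_convMul (hA : A.IsBrace) (f g : WithConv (H →ₗ[k] B)) :
    toConv (A.lTensorComul (f * g).ofConv) =
      toConv (A.lTensorComul f.ofConv) *
        (toConv (ι₁ k H B ∘ₗ antipode k) * toConv (A.lTensorComul g.ofConv)) := by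
  have hlegs : (.id ⊗ₘ (mul' k B ∘ₗ (f.ofConv ⊗ₘ g.ofConv))) ∘ₗ mul₃ k (H ⊗[k] (H ⊗[k] H)) ∘ₗ
        ((.id ⊗ₘ ι₁ k H H) ⊗ₘ (ι₁ k H (H ⊗[k] H) ⊗ₘ (.id ⊗ₘ ι₂ k H H))) =
      mul₃ k (H ⊗[k] B) ∘ₗ ((.id ⊗ₘ f.ofConv) ⊗ₘ (ι₁ k H B ⊗ₘ (.id ⊗ₘ g.ofConv))) := by
    ext
    simp [mul₃, ι₁, ι₂]
  have hcompat : braceLHS k H comul A.Δ = braceRHS k H comul A.Δ (antipode k) := LinearMap.ext hA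
  -- Apply `x ⊗ y ⊗ z ↦ x ⊗ f(y) g(z)` to both sides of (2.1).
  refine ofConv_injective ?_
  rw [ofConv_convMul_convMul]
  calc A.lTensorComul (f * g).ofConv
    _ = (.id ⊗ₘ (mul' k B ∘ₗ (f.ofConv ⊗ₘ g.ofConv))) ∘ₗ braceLHS k H comul A.Δ := by
      simp only [lTensorComul, braceLHS, ← LinearMap.comp_assoc, ← TensorProduct.map_comp,
        LinearMap.id_comp, LinearMap.convMul_def]
    _ = (mul₃ k (H ⊗[k] B) ∘ₗ ((.id ⊗ₘ f.ofConv) ⊗ₘ (ι₁ k H B ⊗ₘ (.id ⊗ₘ g.ofConv)))) ∘ₗ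
        (A.Δ ⊗ₘ (antipode k ⊗ₘ A.Δ)) ∘ₗ (.id ⊗ₘ comul) ∘ₗ comul := by
      rw [hcompat, ← hlegs]
      simp only [braceRHS, LinearMap.comp_assoc, TensorProduct.map_comp]
    _ = _ := by
      simp only [lTensorComul, TensorProduct.map_comp, LinearMap.comp_assoc]

lemma counit_comp_antipode (hA : A.IsBrace) : toConv (A.ε ∘ₗ antipode k) = 1 := by
  have hs : (A.counitTensor k).toLinearMap ∘ₗ ι₁ k H k ∘ₗ antipode k = A.ε ∘ₗ antipode k := by
    ext; simp [ι₁]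
  -- For `f = g = ε`, applying `ε' ⊗ id` leaves `ε = ε * (ε' ∘ S) * ε`.
  have h := congrArg (fun F ↦ (A.counitTensor k).toLinearMap ∘ₗ F.ofConv)
    (hA.lTensorComul_convMul (B := k) 1 1)
  simp only [algHom_comp_convMul_distrib, counitTensor_comp_lTensorComul, ofConv_toConv, hs,
    mul_one, one_mul, toConv_ofConv] at h
  exact congrArg toConv h.symm

lemma counit_eq (hA : A.IsBrace) : A.ε = counit := by
  have h := algHom_comp_antipode_convMul A.counitAlgHom
  have hS : toConv (A.counitAlgHom.toLinearMap ∘ₗ antipode k) = 1 := hA.counit_comp_antipode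
  rw [hS, one_mul] at h
  exact congrArg ofConv h

lemma lTensorComul_one (hA : A.IsBrace) :
    A.lTensorComul (1 : WithConv (H →ₗ[k] B)).ofConv = ι₁ k H B := by
  have hcomm : (.id ⊗ₘ (Algebra.linearMap k B ∘ₗ A.ε)) =
      ι₁ k H B ∘ₗ (TensorProduct.rid k H).toLinearMap ∘ₗ (.id ⊗ₘ A.ε) := by
    ext x y
    simp [ι₁, Algebra.algebraMap_eq_smul_one]
  have hone : (1 : WithConv (H →ₗ[k] B)).ofConv = Algebra.linearMap k B ∘ₗ A.ε := by
    rw [hA.counit_eq]; rfl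
  ext h
  rw [hone, lTensorComul, hcomm]
  exact congrArg (ι₁ k H B) (A.counit_right h)

lemma lTensorComul_ι₁_comp_antipode_convMul (hA : A.IsBrace) :
    toConv (A.lTensorComul (ι₁ k H B ∘ₗ antipode k)) *
        toConv (ι₁ k H (H ⊗[k] B) ∘ₗ antipode k) =
      toConv (ι₁ k H (H ⊗[k] B)) * toConv (A.lTensorComul (ι₁ k H B) ∘ₗ antipode k) := by
  have hinv : toConv (A.lTensorComul (ι₁ k H B)) *
        toConv (A.lTensorComul (ι₁ k H B) ∘ₗ antipode k) = 1 :=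
    algHom_convMul_comp_antipode ((Algebra.TensorProduct.map (.id k H)
      Algebra.TensorProduct.includeLeft).comp A.comulAlgHom)
  have h := hA.lTensorComul_convMul (toConv (ι₁ k H B ∘ₗ antipode k)) (toConv (ι₁ k H B))
  rw [ι₁_comp_antipode_convMul, hA.lTensorComul_one] at h
  rw [h, mul_assoc, mul_assoc, ofConv_toConv, ofConv_toConv, hinv, mul_one]

lemma lTensorComul_coaction (hA : A.IsBrace) :
    toConv (A.lTensorComul A.coaction) =
      toConv (ι₁ k H (H ⊗[k] H)) * (toConv (A.lTensorComul (ι₁ k H H) ∘ₗ antipode k) *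
        toConv (A.lTensorComul A.Δ)) := by
  rw [← mul_assoc, ← hA.lTensorComul_ι₁_comp_antipode_convMul, mul_assoc]
  exact hA.lTensorComul_convMul (toConv (ι₁ k H H ∘ₗ antipode k)) (toConv A.Δ)

lemma map_coaction_comp_coaction (hA : A.IsBrace) :
    toConv ((.id ⊗ₘ A.coaction) ∘ₗ A.coaction) =
      toConv (A.lTensorComul (ι₁ k H H) ∘ₗ antipode k) * toConv (A.lTensorComul A.Δ) :=
  calc toConv ((.id ⊗ₘ A.coaction) ∘ₗ A.coaction)
    _ = toConv (ι₁ k H (H ⊗[k] H) ∘ₗ antipode k) * toConv (A.lTensorComul A.coaction) := by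
      rw [lTensorComul, ← map_id_comp_ι₁_convMul, ← toConv_coaction, ofConv_toConv]
    _ = _ := by rw [hA.lTensorComul_coaction, ← mul_assoc, ι₁_comp_antipode_convMul, one_mul]

lemma counitTensor_comp_coaction (hA : A.IsBrace) :
    (A.counitTensor H).toLinearMap ∘ₗ A.coaction = .id := by
  have hS : toConv ((A.counitTensor H).toLinearMap ∘ₗ ι₁ k H H ∘ₗ antipode k) = 1 := by
    ext h
    simp [ι₁, Algebra.algebraMap_eq_smul_one, hA.counit_eq]
  have hΔ : (A.counitTensor H).toLinearMap ∘ₗ A.Δ = .id := LinearMap.ext A.counit_left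
  refine (algHom_comp_convMul_distrib (A.counitTensor H) (toConv (ι₁ k H H ∘ₗ antipode k))
    (toConv A.Δ)).trans ?_
  rw [ofConv_toConv, ofConv_toConv, hS, hΔ, one_mul]

lemma leftCoaction_coaction (hA : A.IsBrace) : LeftCoaction k H H A.Δ A.ε A.coaction := by
  have hcoassoc : (.id ⊗ₘ A.coaction) ∘ₗ A.coaction =
      (TensorProduct.assoc k H H H).toLinearMap ∘ₗ (A.Δ ⊗ₘ .id) ∘ₗ A.coaction :=
    toConv_injective (hA.map_coaction_comp_coaction.trans A.assoc_map_comul_comp_coaction.symm)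
  exact ⟨LinearMap.congr_fun hcoassoc, LinearMap.congr_fun hA.counitTensor_comp_coaction⟩

lemma comul_eq_Δfromρ (hA : A.IsBrace) : comul = Δfromρ k H A.Δ A.S A.coaction :=
  calc comul
    _ = (γmap k H ((A.S ⊗ₘ .id) ∘ₗ A.coaction) ∘ₗ γmap k H A.coaction) ∘ₗ comul := by
      rw [A.γmap_antipode_comp_γmap hA.leftCoaction_coaction, LinearMap.id_comp]
    _ = γmap k H ((A.S ⊗ₘ .id) ∘ₗ A.coaction) ∘ₗ A.Δ := by
      rw [LinearMap.comp_assoc, A.γmap_coaction_comp_comul]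
    _ = Δfromρ k H A.Δ A.S A.coaction := rfl

end IsBrace

end HopfStruct

end

/-- Remark 2.6, equation (2.5).  For a Hopf brace `(H, Δ, Δ')`
with antipodes `S` (for `Δ`) and `T` (for `Δ'`) and
`ρ(h) = S(h_1) h_{21'} ⊗ h_{22'}`, one has
`h_1 ⊗ h_2 = h_{1'} T(h_{2'(-1)}) ⊗ h_{2'(0)}`, i.e.
`Δ = (m ⊗ id) ∘ (id ⊗ (T ⊗ id) ∘ ρ) ∘ Δ'`. -/
theorem remark_2_6_eq_2_5 {k : Type*} [Field k] {H : Type*} [Ring H] [Algebra k H]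
    (HB : HopfBrace k H) :
    ∀ h : H,
      HB.fst.Δ h
        = Δfromρ k H HB.snd.Δ HB.snd.S
            (ρmap k H HB.fst.Δ HB.snd.Δ HB.fst.S) h := by
  let _ := HB.fst.toHopfAlgebra
  have hHB : HB.snd.IsBrace := HB.compat
  exact LinearMap.congr_fun hHB.comul_eq_Δfromρ

end HopfPaper
end
end

section
/- Let (A, Δ, Δ') be a commutative Hopf brace with antipodes S (for Δ) and T (for Δ'), and write ρ(a) = a_{(-1)} ⊗ a_{(0)} = S(a_1) a_{21'} ⊗ a_{22'}. Then the map φ: A → A ⊗ A defined by φ(a) = a_{[0]} ⊗ a_{[1]} = (T(a_{1'}))_{(-1)} a_{2'} ⊗ (T(a_{1'}))_{(0)} a_{3'} makes A a right comodule algebra over (A, Δ'): (φ ⊗ id)φ = (id ⊗ Δ')φ, (id ⊗ ε)φ = id, and φ is an algebra homomorphism. -/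
open TensorProduct

noncomputable section

namespace HopfPaper

variable (k : Type*) [Field k]

/-!
Algebra homomorphisms from `A` to a commutative algebra `R` form a group under convolution with
respect to each of the two comultiplications. Writing the convolution for `Δ` additively and that
for `Δ'` multiplicatively, the compatibility condition says exactly that these points form a skew
brace, naturally in `R`. By Yoneda, `ρ` and `φ` are algebra homomorphisms representing the two
components `(a, b) ↦ -a + ab` and `(a, b) ↦ (-a + ab)⁻¹ab` of the braiding of a skew brace, and
`φ` being a right coaction means that the second component is a right action of the
multiplicative group.
-/

/-- A skew (left) brace: a multiplicative and an additive group structure, neither assumed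
commutative, on the same type. Its compatibility law is that of the `R`-points of a commutative
Hopf brace. -/
class SkewBrace (G : Type*) extends Group G, AddGroup G where
  mul_add_eq (a b c : G) : a * (b + c) = a * b + (-a + a * c)

namespace SkewBrace

variable {G : Type*} [SkewBrace G]

/-- The map `λ_a(b) = -a + ab` of a skew brace, the first component of its braiding. -/
def lam (a b : G) : G := -a + a * b

/-- The map `τ_b(a) = λ_a(b)⁻¹ab` of a skew brace, the second component of its braiding. -/
def tau (a b : G) : G := (lam a b)⁻¹ * (a * b)

theorem one_eq_zero : (1 : G) = 0 := by
  have h := mul_add_eq (1 : G) 0 0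
  simp only [add_zero, one_mul, zero_add] at h
  exact neg_eq_zero.mp h.symm

theorem add_lam (a b : G) : a + lam a b = a * b :=
  add_neg_cancel_left a (a * b)

theorem lam_mul_tau (a b : G) : lam a b * tau a b = a * b :=
  mul_inv_cancel_left _ _

theorem mul_lam (a b c : G) : a * lam b c = a + (-(a * b) + a * b * c) := by
  have h := mul_add_eq a b (lam b c)
  rw [add_lam, ← mul_assoc] at h
  rw [h, neg_add_cancel_left, add_neg_cancel_left]

theorem lam_mul_left (a b c : G) : lam (a * b) c = lam a (lam b c) :=
  calc -(a * b) + a * b * c = -a + a * lam b c := by rw [mul_lam, neg_add_cancel_left]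

theorem lam_mul_right (a b c : G) : lam a (b * c) = lam a b * lam (tau a b) c :=
  calc lam a (b * c) = lam a b + lam (a * b) c := by
        simp only [lam, add_assoc, add_neg_cancel_left, mul_assoc]
    _ = lam a b + lam (lam a b) (lam (tau a b) c) := by rw [← lam_mul_left, lam_mul_tau]
    _ = lam a b * lam (tau a b) c := add_lam _ _

theorem tau_mul (a b c : G) : tau a (b * c) = tau (tau a b) c :=
  calc (lam a (b * c))⁻¹ * (a * (b * c))
      = (lam (tau a b) c)⁻¹ * ((lam a b)⁻¹ * (a * b) * c) := by
        simp only [lam_mul_right, mul_inv_rev, mul_assoc]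
    _ = tau (tau a b) c := rfl

theorem tau_one (a : G) : tau a 1 = a := by
  rw [tau, lam, mul_one, neg_add_cancel, ← one_eq_zero, inv_one, one_mul]

theorem map_tau {H : Type*} [SkewBrace H] (f : G → H) (hmul : ∀ a b, f (a * b) = f a * f b)
    (hadd : ∀ a b, f (a + b) = f a + f b) (a b : G) : f (tau a b) = tau (f a) (f b) := by
  have hinv (a : G) : f a⁻¹ = (f a)⁻¹ := map_inv (MonoidHom.mk' f hmul) a
  have hneg (a : G) : f (-a) = -f a := map_neg (AddMonoidHom.mk' f hadd) a
  simp only [tau, lam, hmul, hadd, hinv, hneg]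

end SkewBrace

section HopfStruct

variable {k A : Type*} [Field k] [Ring A] [Algebra k A]

/-- A `HopfStruct`, read as a Hopf algebra in the sense of Mathlib; not an instance, since a
Hopf brace carries two of them. -/
abbrev HopfStruct.toHopfAlgebra_s7 (H : HopfStruct k A) : HopfAlgebra k A :=
  letI : Coalgebra k A :=
    { comul := H.Δ
      counit := H.ε
      coassoc := LinearMap.ext fun a ↦ (H.coassoc a).symm
      rTensor_counit_comp_comul := LinearMap.ext fun a ↦
        (TensorProduct.lid k A).injective ((H.counit_left a).trans (by simp))
      lTensor_counit_comp_comul := LinearMap.ext fun a ↦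
        (TensorProduct.rid k A).injective ((H.counit_right a).trans (by simp)) }
  letI : Bialgebra k A :=
    .mk' k A H.counit_one (H.counit_mul _ _) H.comul_one (H.comul_mul _ _)
  { antipode := H.S
    mul_antipode_rTensor_comul := LinearMap.ext H.antipode_left
    mul_antipode_lTensor_comul := LinearMap.ext H.antipode_right }

/-- The comultiplication of a `HopfStruct` as an algebra homomorphism. -/
def HopfStruct.comulAlgHom_s7 (H : HopfStruct k A) : A →ₐ[k] A ⊗[k] A :=
  .ofLinearMap H.Δ H.comul_one H.comul_mul

/-- The counit of a `HopfStruct` as an algebra homomorphism. -/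
def HopfStruct.counitAlgHom_s7 (H : HopfStruct k A) : A →ₐ[k] k :=
  .ofLinearMap H.ε H.counit_one H.counit_mul

theorem algHom_comp_mul₃ {B : Type*} [Ring B] [Algebra k B] (f : A →ₐ[k] B) :
    f.toLinearMap ∘ₗ mul₃ k A =
      mul₃ k B ∘ₗ TensorProduct.map f.toLinearMap
        (TensorProduct.map f.toLinearMap f.toLinearMap) := by
  ext x y z
  simp [mul₃]

theorem isAlgebraMorphism_toLinearMap {B : Type*} [Ring B] [Algebra k B] (f : A →ₐ[k] B) :
    IsAlgebraMorphism k A B f.toLinearMap :=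
  ⟨map_mul f, map_one f⟩

end HopfStruct

/-- The convolution group of the points of an affine group scheme `Spec C` with values in an
arbitrary commutative algebra `R`. It is not an instance because Mathlib already has one for `R` a
bialgebra. -/
abbrev convGroup (k C R : Type*) [CommSemiring k] [CommSemiring C] [HopfAlgebra k C]
    [CommSemiring R] [Algebra k R] : Group (WithConv (C →ₐ[k] R)) where
  inv f := .toConv (f.ofConv.comp (HopfAlgebra.antipodeAlgHom k C))
  inv_mul_cancel f := by
    have h := AlgHom.comp_convMul_distrib f.ofConv
      (.toConv (HopfAlgebra.antipodeAlgHom k C)) (.toConv (AlgHom.id k C))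
    rw [AlgHom.antipode_id_cancel] at h
    refine (WithConv.ofConv_injective h).symm.trans ?_
    ext
    simp

namespace HopfBrace

open Algebra.TensorProduct (includeLeft includeRight productMap productMap_eq_comp_map)

variable {k A : Type*} [Field k] [CommRing A] [Algebra k A]

/-- The `R`-valued points of a commutative Hopf brace: algebra homomorphisms `A →ₐ[k] R`, with
the convolution for the first comultiplication written additively and that for the second written
multiplicatively. -/
@[ext]
structure Points (HB : HopfBrace k A) (R : Type*) [CommRing R] [Algebra k R] where
  toAlgHom : A →ₐ[k] R

variable {HB : HopfBrace k A} {R R' : Type*} [CommRing R] [Algebra k R] [CommRing R'] [Algebra k R']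

namespace Points

/-- Points are the elements of the type on which Mathlib puts the convolution product. -/
def equivWithConv : HB.Points R ≃ WithConv (A →ₐ[k] R) where
  toFun x := .toConv x.toAlgHom
  invFun f := ⟨f.ofConv⟩

instance : Group (HB.Points R) :=
  letI : HopfAlgebra k A := HB.snd.toHopfAlgebra_s7
  letI := convGroup k A R
  equivWithConv.group

instance : AddGroup (HB.Points R) :=
  letI : HopfAlgebra k A := HB.fst.toHopfAlgebra_s7
  letI := convGroup k A R
  (equivWithConv.trans Additive.ofMul).addGroup

theorem toLinearMap_mul (x y : HB.Points R) :
    (x * y).toAlgHom.toLinearMap =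
      LinearMap.mul' k R ∘ₗ
        TensorProduct.map x.toAlgHom.toLinearMap y.toAlgHom.toLinearMap ∘ₗ HB.snd.Δ := rfl

theorem toLinearMap_add (x y : HB.Points R) :
    (x + y).toAlgHom.toLinearMap =
      LinearMap.mul' k R ∘ₗ
        TensorProduct.map x.toAlgHom.toLinearMap y.toAlgHom.toLinearMap ∘ₗ HB.fst.Δ := rfl

theorem toLinearMap_inv (x : HB.Points R) :
    x⁻¹.toAlgHom.toLinearMap = x.toAlgHom.toLinearMap ∘ₗ HB.snd.S := rfl

theorem toLinearMap_neg (x : HB.Points R) :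
    (-x).toAlgHom.toLinearMap = x.toAlgHom.toLinearMap ∘ₗ HB.fst.S := rfl

theorem toLinearMap_add_add (x y z : HB.Points R) :
    (x + (y + z)).toAlgHom.toLinearMap =
      mul₃ k R ∘ₗ TensorProduct.map x.toAlgHom.toLinearMap
        (TensorProduct.map y.toAlgHom.toLinearMap z.toAlgHom.toLinearMap) ∘ₗ
          TensorProduct.map .id HB.fst.Δ ∘ₗ HB.fst.Δ := by
  have h : TensorProduct.map x.toAlgHom.toLinearMap (y + z).toAlgHom.toLinearMap =
      TensorProduct.map .id (LinearMap.mul' k R) ∘ₗ TensorProduct.map x.toAlgHom.toLinearMap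
        (TensorProduct.map y.toAlgHom.toLinearMap z.toAlgHom.toLinearMap) ∘ₗ
          TensorProduct.map .id HB.fst.Δ := by
    simp only [toLinearMap_add, ← TensorProduct.map_comp, LinearMap.id_comp, LinearMap.comp_id]
  rw [toLinearMap_add, h]
  rfl

theorem toLinearMap_injective :
    Function.Injective fun x : HB.Points R ↦ x.toAlgHom.toLinearMap := fun _ _ h ↦
  Points.ext (AlgHom.toLinearMap_injective h)

theorem productMap_comp_braceLHS (x y z : HB.Points R) :
    (productMap x.toAlgHom (productMap y.toAlgHom z.toAlgHom)).toLinearMap ∘ₗ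
        braceLHS k A HB.fst.Δ HB.snd.Δ =
      (x * (y + z)).toAlgHom.toLinearMap := by
  have hyz : (productMap y.toAlgHom z.toAlgHom).toLinearMap ∘ₗ HB.fst.Δ =
      (y + z).toAlgHom.toLinearMap := by
    rw [productMap_eq_comp_map, toLinearMap_add]
    rfl
  rw [toLinearMap_mul, ← hyz, braceLHS, productMap_eq_comp_map, AlgHom.comp_toLinearMap]
  simp only [← LinearMap.comp_assoc]
  congr 1
  ext
  simp

theorem productMap_comp_braceRHS (x y z : HB.Points R) :
    (productMap x.toAlgHom (productMap y.toAlgHom z.toAlgHom)).toLinearMap ∘ₗ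
        braceRHS k A HB.fst.Δ HB.snd.Δ HB.fst.S =
      (x * y + (-x + x * z)).toAlgHom.toLinearMap := by
  set p := productMap x.toAlgHom (productMap y.toAlgHom z.toAlgHom)
  have hxy : p.toLinearMap ∘ₗ TensorProduct.map .id (ι₁ k A A) ∘ₗ HB.snd.Δ =
      (x * y).toAlgHom.toLinearMap := by
    rw [toLinearMap_mul]
    simp only [← LinearMap.comp_assoc]
    congr 1
    ext
    simp [p, ι₁]
  have hx : p.toLinearMap ∘ₗ ι₁ k A (A ⊗[k] A) ∘ₗ HB.fst.S = (-x).toAlgHom.toLinearMap := by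
    ext
    simp [p, ι₁, Algebra.TensorProduct.one_def, toLinearMap_neg]
  have hxz : p.toLinearMap ∘ₗ TensorProduct.map .id (ι₂ k A A) ∘ₗ HB.snd.Δ =
      (x * z).toAlgHom.toLinearMap := by
    rw [toLinearMap_mul]
    simp only [← LinearMap.comp_assoc]
    congr 1
    ext
    simp [p, ι₂]
  rw [toLinearMap_add_add, ← hxy, ← hx, ← hxz, braceRHS, ← LinearMap.comp_assoc,
    algHom_comp_mul₃]
  simp only [TensorProduct.map_comp, LinearMap.comp_assoc]

instance : SkewBrace (HB.Points R) where
  mul_add_eq x y z := by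
    apply toLinearMap_injective
    dsimp only
    rw [← productMap_comp_braceLHS, ← productMap_comp_braceRHS]
    exact congr(_ ∘ₗ $(LinearMap.ext HB.compat))

/-- The map on points induced by an algebra homomorphism. -/
def map (f : R →ₐ[k] R') (x : HB.Points R) : HB.Points R' := ⟨f.comp x.toAlgHom⟩

theorem map_mul (f : R →ₐ[k] R') (x y : HB.Points R) : (x * y).map f = x.map f * y.map f :=
  letI : HopfAlgebra k A := HB.snd.toHopfAlgebra_s7
  Points.ext (AlgHom.comp_convMul_distrib f (equivWithConv x) (equivWithConv y))

theorem map_add (f : R →ₐ[k] R') (x y : HB.Points R) : (x + y).map f = x.map f + y.map f :=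
  letI : HopfAlgebra k A := HB.fst.toHopfAlgebra_s7
  Points.ext (AlgHom.comp_convMul_distrib f (equivWithConv x) (equivWithConv y))

theorem map_tau (f : R →ₐ[k] R') (x y : HB.Points R) :
    (SkewBrace.tau x y).map f = SkewBrace.tau (x.map f) (y.map f) :=
  SkewBrace.map_tau (map f) (map_mul f) (map_add f) x y

end Points

open SkewBrace (lam tau)

variable (HB)

theorem includeLeft_mul_includeRight :
    (⟨includeLeft⟩ * ⟨includeRight⟩ : HB.Points (A ⊗[k] A)) = ⟨HB.snd.comulAlgHom_s7⟩ := by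
  have hid : LinearMap.mul' k (A ⊗[k] A) ∘ₗ TensorProduct.map
      (includeLeft : A →ₐ[k] A ⊗[k] A).toLinearMap includeRight.toLinearMap = .id := by
    ext
    simp
  apply Points.toLinearMap_injective
  dsimp only
  rw [Points.toLinearMap_mul, ← LinearMap.comp_assoc, hid, LinearMap.id_comp]
  rfl

theorem ρmap_eq_lam :
    ρmap k A HB.fst.Δ HB.snd.Δ HB.fst.S =
      (lam ⟨includeLeft⟩ ⟨includeRight⟩ : HB.Points (A ⊗[k] A)).toAlgHom.toLinearMap := by
  rw [lam, includeLeft_mul_includeRight]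
  rfl

/-- The map `φ` as an algebra homomorphism: the point `τ` of the two inclusions
`A → A ⊗ A`, which together form the universal pair of points. -/
def coactionHom : A →ₐ[k] A ⊗[k] A :=
  (tau ⟨includeLeft⟩ ⟨includeRight⟩ : HB.Points (A ⊗[k] A)).toAlgHom

theorem φmap_eq_coactionHom :
    φmap k A HB.fst.Δ HB.snd.Δ HB.fst.S HB.snd.S = HB.coactionHom.toLinearMap := by
  rw [coactionHom, tau, includeLeft_mul_includeRight, Points.toLinearMap_mul,
    Points.toLinearMap_inv, ← ρmap_eq_lam, φmap, ← LinearMap.comp_assoc HB.snd.Δ,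
    ← TensorProduct.map_comp, LinearMap.comp_id, LinearMap.id_comp]
  rfl

theorem comp_coactionHom (f : A ⊗[k] A →ₐ[k] R) :
    f.comp HB.coactionHom =
      (tau ⟨f.comp includeLeft⟩ ⟨f.comp includeRight⟩ : HB.Points R).toAlgHom :=
  congr(Points.toAlgHom $(Points.map_tau f ⟨includeLeft⟩ ⟨includeRight⟩))

theorem map_comulAlgHom_comp_coactionHom :
    (Algebra.TensorProduct.map (.id k A) HB.snd.comulAlgHom_s7).comp HB.coactionHom =
      ((Algebra.TensorProduct.assoc k k k A A A).toAlgHom.comp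
        (Algebra.TensorProduct.map HB.coactionHom (.id k A))).comp HB.coactionHom := by
  let x : HB.Points (A ⊗[k] (A ⊗[k] A)) := ⟨includeLeft⟩
  let y : HB.Points (A ⊗[k] (A ⊗[k] A)) := ⟨includeRight.comp includeLeft⟩
  let z : HB.Points (A ⊗[k] (A ⊗[k] A)) := ⟨includeRight.comp includeRight⟩
  let a := (Algebra.TensorProduct.assoc k k k A A A).toAlgHom
  let f : A ⊗[k] A →ₐ[k] A ⊗[k] (A ⊗[k] A) :=
    Algebra.TensorProduct.map (.id k A) HB.snd.comulAlgHom_s7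
  let g : A ⊗[k] A →ₐ[k] A ⊗[k] (A ⊗[k] A) :=
    a.comp (Algebra.TensorProduct.map HB.coactionHom (.id k A))
  have hfx : ⟨f.comp includeLeft⟩ = x := by
    ext
    simp [f, x]
  have hfyz : ⟨f.comp includeRight⟩ = y * z :=
    calc ⟨f.comp includeRight⟩ = Points.map includeRight ⟨HB.snd.comulAlgHom_s7⟩ := by
          ext
          simp [f, Points.map]
      _ = y * z := by
          rw [← includeLeft_mul_includeRight, Points.map_mul]
          rfl
  have hgxy : ⟨g.comp includeLeft⟩ = tau x y :=
    calc ⟨g.comp includeLeft⟩ = ⟨(a.comp includeLeft).comp HB.coactionHom⟩ := by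
          ext
          simp [g]
      _ = tau x y := by
          rw [comp_coactionHom]
          rfl
  have hgz : ⟨g.comp includeRight⟩ = z := by
    ext
    simp [g, a, z, Algebra.TensorProduct.one_def]
  calc f.comp HB.coactionHom = (tau x (y * z)).toAlgHom := by
        rw [← hfx, ← hfyz, comp_coactionHom]
    _ = (tau (tau x y) z).toAlgHom := by rw [SkewBrace.tau_mul]
    _ = g.comp HB.coactionHom := by rw [← hgxy, ← hgz, comp_coactionHom]

theorem map_counitAlgHom_comp_coactionHom :
    ((Algebra.TensorProduct.rid k k A).toAlgHom.comp
        (Algebra.TensorProduct.map (.id k A) HB.snd.counitAlgHom_s7)).comp HB.coactionHom =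
      .id k A := by
  let f := (Algebra.TensorProduct.rid k k A).toAlgHom.comp
    (Algebra.TensorProduct.map (.id k A) HB.snd.counitAlgHom_s7)
  have hid : f.comp includeLeft = .id k A := by
    ext
    simp [f]
  have hone : ⟨f.comp includeRight⟩ = (1 : HB.Points A) := by
    ext a
    refine Eq.trans ?_ (Algebra.algebraMap_eq_smul_one (HB.snd.ε a)).symm
    simp [f, HopfStruct.counitAlgHom_s7]
  calc f.comp HB.coactionHom
      = (tau ⟨f.comp includeLeft⟩ ⟨f.comp includeRight⟩ : HB.Points A).toAlgHom :=
        HB.comp_coactionHom f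
    _ = .id k A := by rw [hid, hone, SkewBrace.tau_one]

theorem rightCoaction_φmap :
    RightCoaction k A A HB.snd.Δ HB.snd.ε
      (φmap k A HB.fst.Δ HB.snd.Δ HB.fst.S HB.snd.S) := by
  rw [φmap_eq_coactionHom]
  exact ⟨DFunLike.congr_fun HB.map_comulAlgHom_comp_coactionHom,
    DFunLike.congr_fun HB.map_counitAlgHom_comp_coactionHom⟩

theorem isAlgebraMorphism_φmap :
    IsAlgebraMorphism k A (A ⊗[k] A) (φmap k A HB.fst.Δ HB.snd.Δ HB.fst.S HB.snd.S) := by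
  rw [φmap_eq_coactionHom]
  exact isAlgebraMorphism_toLinearMap _

end HopfBrace

/-- Lemma 2.8(2).  Let `(A, Δ, Δ')` be a commutative Hopf
brace with antipodes `S` (for `Δ`) and `T` (for `Δ'`), and
`ρ(a) = a_{(-1)} ⊗ a_{(0)} = S(a_1) a_{21'} ⊗ a_{22'}`.  Then
`φ(a) = (T(a_{1'}))_{(-1)} a_{2'} ⊗ (T(a_{1'}))_{(0)} a_{3'}` makes `A` a right
comodule algebra over `(A, Δ')`: `(φ ⊗ id)φ = (id ⊗ Δ')φ`, `(id ⊗ ε)φ = id`,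
and `φ` is an algebra homomorphism. -/
theorem lemma_2_8_2 {k : Type*} [Field k] {A : Type*} [Ring A] [Algebra k A]
    (HB : HopfBrace k A) (hcomm : ∀ x y : A, x * y = y * x) :
    RightCoaction k A A HB.snd.Δ HB.snd.ε
        (φmap k A HB.fst.Δ HB.snd.Δ HB.fst.S HB.snd.S) ∧
    IsAlgebraMorphism k A (A ⊗[k] A)
        (φmap k A HB.fst.Δ HB.snd.Δ HB.fst.S HB.snd.S) := by
  let _ : CommRing A := { ‹Ring A› with mul_comm := hcomm }
  exact ⟨HB.rightCoaction_φmap, HB.isAlgebraMorphism_φmap⟩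

end HopfPaper
end
end
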